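/- For every n ∈ ℤ and every t > 0 with t ≠ 1, the modal kernel satisfies the parity relation K_n^α(1, t) = t · K_n^α(t, 1). -/

import Mathlib

open Real

/-- Parametrization of the infinite straight cone of opening angle `2α`. -/
noncomputable def coneParam (α t θ : ℝ) : EuclideanSpace ℝ (Fin 3) :=
  !₂[sin α * t * cos θ, sin α * t * sin θ, cos α * t]

/-- Outward unit normal of the cone. -/
noncomputable def coneNormal (α θ : ℝ) : EuclideanSpace ℝ (Fin 3) :=
  !₂[cos α * cos θ, cos α * sin θ, -sin α]

/-- The layer-potential kernel of the infinite straight cone. -/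
noncomputable def coneKernel (α t θ t' θ' : ℝ) : ℝ :=
  (inner ℝ (coneParam α t θ - coneParam α t' θ') (coneNormal α θ) : ℝ) /
    ‖coneParam α t' θ' - coneParam α t θ‖ ^ 3

/-- The `n`-th modal kernel `K_n^α(t,t') = (1/(2π)) ∫₀^{2π} e^{−inθ} K^{Γ_α}(t,θ,t',0) dθ`. -/
noncomputable def modalKernel (α : ℝ) (n : ℤ) (t t' : ℝ) : ℂ :=
  ((1 / (2 * π) : ℝ) : ℂ) *
    ∫ θ in (0:ℝ)..(2 * π), Complex.exp (-Complex.I * (n : ℂ) * (θ : ℂ)) * (coneKernel α t θ t' 0 : ℂ)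

/-!
The position vector of a point of the cone is tangent to the cone, so
`⟨r(t,θ) - r(t',θ'), ν(θ)⟩ = -⟨r(t',θ'), ν(θ)⟩`, which is `t'` times a function of the angles.
The distance `|r(t',θ') - r(t,θ)|` depends on the angles only through `cos (θ - θ')` and is
symmetric in the radii. Hence `t K(t,θ,t',θ')` is symmetric in `t` and `t'`, and so is each of its
Fourier coefficients.
-/

theorem inner_coneParam_coneParam (α t θ t' θ' : ℝ) :
    inner ℝ (coneParam α t θ) (coneParam α t' θ') =
      t * t' * (sin α ^ 2 * cos (θ - θ') + cos α ^ 2) := by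
  simp only [coneParam, PiLp.inner_apply, Fin.sum_univ_three, RCLike.inner_apply, conj_trivial,
    Matrix.cons_val, cos_sub]
  ring

theorem inner_coneParam_coneNormal (α t θ θ' : ℝ) :
    inner ℝ (coneParam α t θ) (coneNormal α θ') =
      t * (sin α * cos α * (cos (θ - θ') - 1)) := by
  simp only [coneParam, coneNormal, PiLp.inner_apply, Fin.sum_univ_three, RCLike.inner_apply,
    conj_trivial, Matrix.cons_val, cos_sub]
  ring

theorem norm_coneParam_sq (α t θ : ℝ) : ‖coneParam α t θ‖ ^ 2 = t ^ 2 := by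
  rw [← real_inner_self_eq_norm_sq, inner_coneParam_coneParam, sub_self, cos_zero, mul_one,
    sin_sq_add_cos_sq, mul_one, sq]

theorem norm_coneParam_sub_swap_radii (α t θ t' θ' : ℝ) :
    ‖coneParam α t θ - coneParam α t' θ'‖ = ‖coneParam α t' θ - coneParam α t θ'‖ := by
  rw [← sq_eq_sq₀ (norm_nonneg _) (norm_nonneg _)]
  simp only [norm_sub_sq_real, norm_coneParam_sq, inner_coneParam_coneParam]
  ring

theorem inner_coneParam_sub_coneNormal (α t θ t' θ' : ℝ) :
    inner ℝ (coneParam α t θ - coneParam α t' θ') (coneNormal α θ) =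
      t' * (sin α * cos α * (1 - cos (θ' - θ))) := by
  rw [inner_sub_left, inner_coneParam_coneNormal, inner_coneParam_coneNormal, sub_self, cos_zero]
  ring

theorem mul_coneKernel_swap_radii (α t θ t' θ' : ℝ) :
    t * coneKernel α t θ t' θ' = t' * coneKernel α t' θ t θ' := by
  simp only [coneKernel, inner_coneParam_sub_coneNormal]
  rw [norm_coneParam_sub_swap_radii α t' θ' t θ]
  ring

theorem modalKernel_parity_general (α : ℝ) (n : ℤ) (t t' : ℝ) :
    (t : ℂ) * modalKernel α n t t' = (t' : ℂ) * modalKernel α n t' t := by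
  have kernel_swap (θ : ℝ) :
      (t : ℂ) * coneKernel α t θ t' 0 = t' * coneKernel α t' θ t 0 :=
    mod_cast mul_coneKernel_swap_radii α t θ t' 0
  rw [modalKernel, modalKernel, mul_left_comm, mul_left_comm (t' : ℂ)]
  congr 1
  rw [← intervalIntegral.integral_const_mul, ← intervalIntegral.integral_const_mul]
  congr 1 with θ
  rw [mul_left_comm, kernel_swap, mul_left_comm]

/-- The parity relation for the modal kernel: `K_n^α(1, t) = t · K_n^α(t, 1)`. -/
theorem modalKernel_parity (α : ℝ) (hα0 : 0 < α) (hαπ : α < π) (hα2 : α ≠ π / 2)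
    (n : ℤ) (t : ℝ) (ht : 0 < t) (hne : t ≠ 1) :
    modalKernel α n 1 t = (t : ℂ) * modalKernel α n t 1 := by
  simpa using modalKernel_parity_general α n 1 t
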